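/- For all n ≥ k ≥ 0, the higher derangement numbers satisfy d_n^k ≥ d_{n-1}^k whenever n ≥ k+2, i.e., each column of the normalized Euler difference table is eventually monotone increasing. -/

import Mathlib

/-- Higher derangement numbers via the closed form
`dSum n k = (1/k!) ∑_{l=0}^k C(k,l) d_{n-l}`. -/
def dSum (n k : ℕ) : ℚ :=
  (1 / (Nat.factorial k : ℚ)) *
    ∑ l ∈ Finset.range (k + 1), (Nat.choose k l : ℚ) * (numDerangements (n - l) : ℚ)

theorem numDerangements_mono_step (m : ℕ) :
    numDerangements (m + 1) ≤ numDerangements (m + 2) := by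
  rw [numDerangements_add_two]
  nlinarith [Nat.zero_le (m * (numDerangements m + numDerangements (m + 1)))]

theorem dSum_monotone (n k : ℕ) (h : k + 2 ≤ n) : dSum (n - 1) k ≤ dSum n k := by
  unfold dSum
  refine mul_le_mul_of_nonneg_left (Finset.sum_le_sum fun l hl => ?_) (by positivity)
  refine mul_le_mul_of_nonneg_left ?_ (by positivity)
  have hl' := Finset.mem_range.mp hl
  obtain ⟨m, hm⟩ : ∃ m, n = m + 2 + l := ⟨n - 2 - l, by omega⟩
  have h1 : n - 1 - l = m + 1 := by omega
  have h2 : n - l = m + 2 := by omega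
  rw [h1, h2]
  exact_mod_cast numDerangements_mono_step m
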